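/- Nonadaptive approximate history independence does not imply adaptive history independence: Fix n ∈ ℕ and let the operation alphabet contain operations ins(w) and del(w) for finite bit strings w. Define an implementation Impl whose tape is r ∈ {0,1}^ℕ and whose state after a finite operation sequence σ is: σ itself, if the first operation of σ equals ins(r|_n) where r|_n is the first n bits of r; and (the tagged value) r|_n otherwise (in particular for the empty sequence), where the state space is the disjoint union of operation sequences and n-bit strings. Then: (a) for every fixed pair of operation sequences σ and σ', the states Impl(σ; R).state and Impl(σ'; R).state, for R uniform on {0,1}^ℕ, are (0, 2·2^{−n})-indistinguishable; and (b) for every tape r, the sequences σ(r) = (ins(r|_n), del(r|_n)) and σ*(r) = the empty sequence are logically equivalent as dictionary operation sequences (both leave the dictionary empty), yet Impl(σ(r); r).state ≠ Impl(σ*(r); r).state. -/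

import Mathlib

/-! For a fixed operation sequence `σ`, the tapes whose first `n` bits are the word inserted by the
first operation of `σ` all share one prefix, so they form an event of probability at most `2⁻ⁿ`.
Outside this event the state is `r|ₙ` whatever `σ` is. Hence, running two fixed sequences on the
same random tape, the states coincide except with probability at most `2 · 2⁻ⁿ`, and this coupling
bounds the distance of their laws. An adversary who sees `r` can insert `r|ₙ` first, which leaves
the operation sequence itself in the state. -/

open MeasureTheory
open scoped ENNReal

/-- Dictionary operations on finite bit strings: insertions and deletions. -/
inductive DOp where
  | ins : List Bool → DOp
  | del : List Bool → DOp
deriving DecidableEq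

instance : MeasurableSpace (List DOp) := ⊤
instance : MeasurableSpace (List Bool) := ⊤

/-- The first `n` bits of an infinite bit sequence. -/
def prefixn (n : ℕ) (r : ℕ → Bool) : List Bool :=
  List.ofFn fun i : Fin n => r ↑i

/-- The state of the implementation after running the operation sequence `σ` on tape `r`:
it is `σ` itself if the first operation of `σ` equals `ins(r|ₙ)`, and (the tagged value)
`r|ₙ` otherwise (in particular for the empty sequence). -/
def implState (n : ℕ) (σ : List DOp) (r : ℕ → Bool) : List DOp ⊕ List Bool :=
  if σ.head? = some (DOp.ins (prefixn n r)) then Sum.inl σ else Sum.inr (prefixn n r)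

/-- One step of the dictionary ADT: `ins w` adds `w` to the logical set, `del w` removes it. -/
def dictStep (s : Set (List Bool)) : DOp → Set (List Bool)
  | .ins w => insert w s
  | .del w => s \ {w}

/-- The logical state (set of currently inserted strings) after an operation sequence,
starting from the empty set. -/
def dictRun (σ : List DOp) : Set (List Bool) :=
  σ.foldl dictStep ∅

section Indistinguishability

variable {Ω α : Type*} [MeasurableSpace Ω] [MeasurableSpace α]

/-- `(ε, δ)`-indistinguishability of two laws. The real parameters enter the `ℝ≥0∞`-valued
inequalities through `ENNReal.ofReal`, so a negative `δ` counts as `0`. -/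
def ApproxIndist (ε δ : ℝ) (P Q : Measure α) : Prop :=
  ∀ E, MeasurableSet E →
    P E ≤ ENNReal.ofReal (Real.exp ε) * Q E + ENNReal.ofReal δ ∧
    Q E ≤ ENNReal.ofReal (Real.exp ε) * P E + ENNReal.ofReal δ

lemma map_apply_le_map_apply_add_measure_ne {μ : Measure Ω} {f g : Ω → α}
    (hf : AEMeasurable f μ) (hg : AEMeasurable g μ) {E : Set α} (hE : MeasurableSet E) :
    μ.map f E ≤ μ.map g E + μ {x | f x ≠ g x} := by
  rw [Measure.map_apply_of_aemeasurable hf hE, Measure.map_apply_of_aemeasurable hg hE]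
  have hsub : f ⁻¹' E ⊆ g ⁻¹' E ∪ {x | f x ≠ g x} := fun x hx =>
    (eq_or_ne (f x) (g x)).imp_left fun hfg => by rwa [Set.mem_preimage, ← hfg]
  exact (measure_mono hsub).trans (measure_union_le _ _)

lemma ApproxIndist.map_of_measure_ne_le {μ : Measure Ω} {f g : Ω → α} {δ : ℝ}
    (hf : AEMeasurable f μ) (hg : AEMeasurable g μ)
    (hfg : μ {x | f x ≠ g x} ≤ ENNReal.ofReal δ) :
    ApproxIndist 0 δ (μ.map f) (μ.map g) := by
  intro E hE
  have hgf : μ {x | g x ≠ f x} ≤ ENNReal.ofReal δ := by simpa only [ne_comm] using hfg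
  rw [Real.exp_zero, ENNReal.ofReal_one, one_mul, one_mul]
  exact ⟨(map_apply_le_map_apply_add_measure_ne hf hg hE).trans (by gcongr),
    (map_apply_le_map_apply_add_measure_ne hg hf hE).trans (by gcongr)⟩

end Indistinguishability

lemma dictRun_ins_del (w : List Bool) : dictRun [.ins w, .del w] = dictRun [] := by
  simp [dictRun, dictStep]

lemma prefixn_eq_prefixn_iff {n : ℕ} {r s : ℕ → Bool} :
    prefixn n r = prefixn n s ↔ ∀ i : Fin n, r i = s i :=
  List.ofFn_injective.eq_iff.trans funext_iff

lemma measurable_prefixn (n : ℕ) : Measurable (prefixn n) :=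
  (Measurable.of_discrete (f := List.ofFn)).comp
    (measurable_pi_lambda _ fun i : Fin n => measurable_pi_apply (i : ℕ))

/-- The event that the first operation of `σ` inserts the first `n` bits of the tape, on which
the implementation reveals `σ`. -/
def guessEvent (n : ℕ) (σ : List DOp) : Set (ℕ → Bool) :=
  {r | σ.head? = some (.ins (prefixn n r))}

section Implementation

variable {n : ℕ} {σ : List DOp} {r : ℕ → Bool}

lemma implState_of_mem_guessEvent (h : r ∈ guessEvent n σ) : implState n σ r = .inl σ :=
  if_pos h

lemma implState_of_notMem_guessEvent (h : r ∉ guessEvent n σ) :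
    implState n σ r = .inr (prefixn n r) :=
  if_neg h

lemma measurableSet_guessEvent (n : ℕ) (σ : List DOp) : MeasurableSet (guessEvent n σ) :=
  measurable_prefixn n (t := {w | σ.head? = some (.ins w)}) trivial

lemma measurable_implState (n : ℕ) (σ : List DOp) : Measurable (implState n σ) :=
  .ite (measurableSet_guessEvent n σ) measurable_const (measurable_inr.comp (measurable_prefixn n))

lemma setOf_implState_ne_subset (n : ℕ) (σ τ : List DOp) :
    {r | implState n σ r ≠ implState n τ r} ⊆ guessEvent n σ ∪ guessEvent n τ := by
  intro r hne
  by_contra hr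
  obtain ⟨hσ, hτ⟩ := not_or.1 hr
  exact hne <|
    (implState_of_notMem_guessEvent hσ).trans (implState_of_notMem_guessEvent hτ).symm

lemma implState_ins_prefixn_cons_ne_implState_nil (n : ℕ) (r : ℕ → Bool) (τ : List DOp) :
    implState n (.ins (prefixn n r) :: τ) r ≠ implState n [] r := by
  have hmem : r ∈ guessEvent n (.ins (prefixn n r) :: τ) := rfl
  have hnil : r ∉ guessEvent n [] := nofun
  rw [implState_of_mem_guessEvent hmem, implState_of_notMem_guessEvent hnil]
  exact Sum.inl_ne_inr

lemma prefixn_eq_of_mem_guessEvent {s : ℕ → Bool} (hr : r ∈ guessEvent n σ)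
    (hs : s ∈ guessEvent n σ) : prefixn n r = prefixn n s :=
  DOp.ins.inj (Option.some.inj (hr.symm.trans hs))

variable {Q : Measure (ℕ → Bool)}

lemma measure_guessEvent_le {p : ℝ≥0∞}
    (hQ : ∀ w : Fin n → Bool, Q {x | ∀ i : Fin n, x ↑i = w i} ≤ p) (σ : List DOp) :
    Q (guessEvent n σ) ≤ p := by
  obtain hempty | ⟨s, hs⟩ := (guessEvent n σ).eq_empty_or_nonempty
  · simp [hempty]
  · have hsub : guessEvent n σ ⊆ {x | ∀ i : Fin n, x i = s i} := fun r hr =>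
      prefixn_eq_prefixn_iff.1 (prefixn_eq_of_mem_guessEvent hr hs)
    exact (measure_mono hsub).trans (hQ fun i => s i)

lemma measure_implState_ne_le {p : ℝ≥0∞}
    (hQ : ∀ w : Fin n → Bool, Q {x | ∀ i : Fin n, x ↑i = w i} ≤ p) (σ τ : List DOp) :
    Q {r | implState n σ r ≠ implState n τ r} ≤ 2 * p :=
  calc Q {r | implState n σ r ≠ implState n τ r}
      ≤ Q (guessEvent n σ ∪ guessEvent n τ) := measure_mono (setOf_implState_ne_subset n σ τ)
    _ ≤ Q (guessEvent n σ) + Q (guessEvent n τ) := measure_union_le _ _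
    _ ≤ p + p := add_le_add (measure_guessEvent_le hQ σ) (measure_guessEvent_le hQ τ)
    _ = 2 * p := (two_mul p).symm

lemma approxIndist_map_implState {δ : ℝ}
    (hQ : ∀ w : Fin n → Bool, Q {x | ∀ i : Fin n, x ↑i = w i} ≤ ENNReal.ofReal δ)
    (σ τ : List DOp) :
    ApproxIndist 0 (2 * δ) (Q.map (implState n σ)) (Q.map (implState n τ)) := by
  refine .map_of_measure_ne_le (measurable_implState n σ).aemeasurable
    (measurable_implState n τ).aemeasurable ?_
  rw [ENNReal.ofReal_mul zero_le_two, ENNReal.ofReal_ofNat]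
  exact measure_implState_ne_le hQ σ τ

end Implementation

theorem nonadaptive_HI_not_adaptive_general (n : ℕ) (Q : Measure (ℕ → Bool)) (δ : ℝ)
    (hQ : ∀ w : Fin n → Bool, Q {x | ∀ i : Fin n, x ↑i = w i} ≤ ENNReal.ofReal δ) :
    (∀ σ σ' : List DOp,
      ApproxIndist 0 (2 * δ) (Q.map (implState n σ)) (Q.map (implState n σ'))) ∧
    (∀ r : ℕ → Bool,
      dictRun [DOp.ins (prefixn n r), DOp.del (prefixn n r)] = dictRun [] ∧
      implState n [DOp.ins (prefixn n r), DOp.del (prefixn n r)] r ≠ implState n [] r) :=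
  ⟨approxIndist_map_implState hQ, fun r =>
    ⟨dictRun_ins_del _, implState_ins_prefixn_cons_ne_implState_nil n r _⟩⟩

lemma one_half_pow_eq_ofReal (n : ℕ) : (1 / 2 : ℝ≥0∞) ^ n = ENNReal.ofReal ((2 : ℝ)⁻¹ ^ n) := by
  rw [ENNReal.ofReal_pow (by positivity), ENNReal.ofReal_inv_of_pos two_pos,
    ENNReal.ofReal_ofNat, one_div]

/-- Nonadaptive approximate history independence does not imply adaptive history
independence: (a) for every fixed pair of operation sequences `σ, σ'`, the states
`Impl(σ; R).state` and `Impl(σ'; R).state` for `R` a uniform random tape are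
`(0, 2·2^{−n})`-indistinguishable; (b) yet for every tape `r`, the sequences
`(ins(r|ₙ), del(r|ₙ))` and the empty sequence are logically equivalent dictionary
operation sequences on which the implementation's states differ. -/
theorem nonadaptive_HI_not_adaptive (n : ℕ)
    (Q : Measure (ℕ → Bool)) [IsProbabilityMeasure Q]
    (hQ : ∀ (m : ℕ) (w : Fin m → Bool),
      Q {x | ∀ i : Fin m, x ↑i = w i} = (1 / 2 : ℝ≥0∞) ^ m) :
    (∀ σ σ' : List DOp, ∀ E : Set (List DOp ⊕ List Bool),
      (Q.map (implState n σ)) E ≤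
        ENNReal.ofReal (Real.exp 0) * (Q.map (implState n σ')) E +
          ENNReal.ofReal (2 * (2 : ℝ)⁻¹ ^ n) ∧
      (Q.map (implState n σ')) E ≤
        ENNReal.ofReal (Real.exp 0) * (Q.map (implState n σ)) E +
          ENNReal.ofReal (2 * (2 : ℝ)⁻¹ ^ n)) ∧
    (∀ r : ℕ → Bool,
      dictRun [DOp.ins (prefixn n r), DOp.del (prefixn n r)] = dictRun [] ∧
      implState n [DOp.ins (prefixn n r), DOp.del (prefixn n r)] r ≠ implState n [] r) := by
  obtain ⟨hindist, hadaptive⟩ := nonadaptive_HI_not_adaptive_general n Q (2⁻¹ ^ n)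
    fun w => ((hQ n w).trans (one_half_pow_eq_ofReal n)).le
  exact ⟨fun σ σ' E => hindist σ σ' E (measurableSet_sum_iff.2 ⟨trivial, trivial⟩), hadaptive⟩
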